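/- arXiv:1610.00518 — 2 statements merged into one kernel-verified Lean document; each statement's English description precedes it below -/
import Mathlib

section
/- Let c ∈ ℝ^s have pairwise distinct entries, let S1, S2 be s×s real matrices with S1 V1 = (I − S2) V0, and let φ : ℝ → ℝ^m be s times continuously differentiable on an interval [a, b] with ‖φ^{(s)}(t)‖ ≤ M on [a, b]. Then there is a constant K, depending only on c, S1, S2, s, such that for all Δt > 0 and all n with all times t_{n−1,j}, t_{n,j} in [a, b], the extrapolation error δ_n with components (δ_n)_i = φ(t_{n,i}) − Σ_{j=1}^s (S1)_{ij} φ(t_{n−1,j}) − Σ_{j=1}^s (S2)_{ij} φ(t_{n,j}) satisfies max_i ‖(δ_n)_i‖ ≤ K M Δt^s. -/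
open Finset

/-!
The error at stage `i` is a fixed linear combination of the values of `φ` at the `2s` nodes, and the
order condition says that its coefficients annihilate every polynomial of degree less than `s`, a
property that survives affine changes of the variable. Subtracting the Taylor polynomial of `φ` of
degree `s - 1` about `t_{n,i}` therefore leaves the error unchanged, and every node lies within a
constant multiple of `Δt` of `t_{n,i}`, so that the Taylor remainders are `O(M Δt ^ s)`.
-/

open scoped Polynomial

section Moments

variable {κ R : Type*} [Fintype κ]

theorem sum_mul_eval_eq_zero_of_sum_mul_pow_eq_zero [CommSemiring R] {w x : κ → R} {p : ℕ}
    (hw : ∀ k < p, ∑ j, w j * x j ^ k = 0) {P : R[X]} (hP : P.natDegree < p) :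
    ∑ j, w j * P.eval (x j) = 0 := by
  simp only [Polynomial.eval_eq_sum_range' hP, mul_sum, mul_left_comm (w _)]
  rw [sum_comm]
  refine sum_eq_zero fun k hk => ?_
  rw [← mul_sum, hw k (mem_range.mp hk), mul_zero]

theorem sum_mul_affine_pow_eq_zero [CommSemiring R] {w x : κ → R} {p : ℕ}
    (hw : ∀ k < p, ∑ j, w j * x j ^ k = 0) (α β : R) {k : ℕ} (hk : k < p) :
    ∑ j, w j * (α * x j + β) ^ k = 0 := by
  have hdeg : ((Polynomial.C α * Polynomial.X + Polynomial.C β) ^ k).natDegree ≤ k := by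
    compute_degree
  simpa using sum_mul_eval_eq_zero_of_sum_mul_pow_eq_zero hw (hdeg.trans_lt hk)

end Moments

section Taylor

variable {E : Type*} [NormedAddCommGroup E] [NormedSpace ℝ E] {f : ℝ → E} {D : Set ℝ} {x₀ M : ℝ}

theorem norm_sub_taylorWithinEval_le_of_convex {n : ℕ} (hD : Convex ℝ D)
    (hf : ContDiffOn ℝ (n + 1) f D) (hM : ∀ t ∈ D, ‖iteratedDerivWithin (n + 1) f D t‖ ≤ M)
    (hx₀ : x₀ ∈ D) {x : ℝ} (hx : x ∈ D) :
    ‖f x - taylorWithinEval f n D x₀ x‖ ≤ M * |x - x₀| ^ (n + 1) / n.factorial := by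
  rcases D.eq_singleton_or_nontrivial hx₀ with rfl | hnontrivial
  · simp [Set.mem_singleton_iff.mp hx]
  have hunique : UniqueDiffOn ℝ D :=
    uniqueDiffOn_convex hD (hD.nontrivial_iff_nonempty_interior.mp hnontrivial)
  have hsub : Set.uIcc x₀ x ⊆ D := hD.ordConnected.uIcc_subset hx₀ hx
  have hdiff : DifferentiableOn ℝ (iteratedDerivWithin n f D) D :=
    hf.differentiableOn_iteratedDerivWithin (mod_cast n.lt_succ_self) hunique
  -- The mean value inequality is applied in the expansion point, where differentiating the Taylor
  -- polynomial telescopes to a single term.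
  have hderiv : ∀ t ∈ Set.uIcc x₀ x, HasDerivWithinAt (fun y => taylorWithinEval f n D y x)
      (((n.factorial : ℝ)⁻¹ * (x - t) ^ n) • iteratedDerivWithin (n + 1) f D t) (Set.uIcc x₀ x) t :=
    fun t ht => (hasDerivWithinAt_taylorWithinEval hunique self_mem_nhdsWithin (hsub ht)
      subset_rfl hf.of_succ (hdiff t (hsub ht))).mono hsub
  have hbound : ∀ t ∈ Set.uIcc x₀ x,
      ‖((n.factorial : ℝ)⁻¹ * (x - t) ^ n) • iteratedDerivWithin (n + 1) f D t‖ ≤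
        (n.factorial : ℝ)⁻¹ * |x - x₀| ^ n * M := by
    intro t ht
    rw [norm_smul, Real.norm_eq_abs, abs_mul, abs_pow, abs_inv, Nat.abs_cast]
    have hdist : |x - t| ≤ |x - x₀| := Set.abs_sub_right_of_mem_uIcc ht
    have hMt : ‖iteratedDerivWithin (n + 1) f D t‖ ≤ M := hM t (hsub ht)
    gcongr
  have hmean := (convex_uIcc x₀ x).norm_image_sub_le_of_norm_hasDerivWithin_le hderiv hbound
    Set.left_mem_uIcc Set.right_mem_uIcc
  rw [taylorWithinEval_self, Real.norm_eq_abs] at hmean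
  exact hmean.trans_eq (by ring)

variable {κ : Type*} [Fintype κ] {w x : κ → ℝ}

theorem sum_smul_taylorWithinEval_eq_zero {n : ℕ}
    (hw : ∀ k < n + 1, ∑ j, w j * (x j - x₀) ^ k = 0) :
    ∑ j, w j • taylorWithinEval f n D x₀ (x j) = 0 := by
  simp only [taylor_within_apply, smul_sum, smul_smul, mul_left_comm (w _)]
  rw [sum_comm]
  refine sum_eq_zero fun k hk => ?_
  rw [← sum_smul, ← mul_sum, hw k (mem_range.mp hk), mul_zero, zero_smul]

theorem norm_sum_smul_le_of_sum_mul_sub_pow_eq_zero {p : ℕ} (hD : Convex ℝ D)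
    (hf : ContDiffOn ℝ p f D) (hM : ∀ t ∈ D, ‖iteratedDerivWithin p f D t‖ ≤ M)
    (hx₀ : x₀ ∈ D) (hx : ∀ j, x j ∈ D) (hw : ∀ k < p, ∑ j, w j * (x j - x₀) ^ k = 0) :
    ‖∑ j, w j • f (x j)‖ ≤ (∑ j, |w j| * |x j - x₀| ^ p) * M := by
  obtain ⟨T, hT, hrem⟩ : ∃ T : ℝ → E, ∑ j, w j • T (x j) = 0 ∧
      ∀ j, ‖f (x j) - T (x j)‖ ≤ |x j - x₀| ^ p * M := by
    cases p with
    | zero => exact ⟨0, by simp, fun j => by simpa using hM (x j) (hx j)⟩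
    | succ n =>
      have hM₀ : 0 ≤ M := (norm_nonneg _).trans (hM x₀ hx₀)
      refine ⟨taylorWithinEval f n D x₀, sum_smul_taylorWithinEval_eq_zero hw, fun j => ?_⟩
      calc ‖f (x j) - taylorWithinEval f n D x₀ (x j)‖
          ≤ M * |x j - x₀| ^ (n + 1) / n.factorial :=
            norm_sub_taylorWithinEval_le_of_convex hD (mod_cast hf) hM hx₀ (hx j)
        _ ≤ M * |x j - x₀| ^ (n + 1) :=
            div_le_self (by positivity) (mod_cast n.factorial_pos)
        _ = |x j - x₀| ^ (n + 1) * M := mul_comm _ _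
  calc ‖∑ j, w j • f (x j)‖ = ‖∑ j, w j • (f (x j) - T (x j))‖ := by
        simp only [smul_sub, sum_sub_distrib, hT, sub_zero]
    _ ≤ ∑ j, |w j| * (|x j - x₀| ^ p * M) := norm_sum_le_of_le _ fun j _ => by
        rw [norm_smul, Real.norm_eq_abs]
        exact mul_le_mul_of_nonneg_left (hrem j) (abs_nonneg _)
    _ = (∑ j, |w j| * |x j - x₀| ^ p) * M := by simp only [sum_mul, mul_assoc]

end Taylor

section Extrapolation

variable {ι : Type*} [Fintype ι] {E : Type*} [NormedAddCommGroup E] [NormedSpace ℝ E]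

/-- The extrapolation error `(δ_n)_i` at the time `t = t_n` with step size `h = Δt`. -/
def extrapolationError (c : ι → ℝ) (S1 S2 : Matrix ι ι ℝ) (φ : ℝ → E) (t h : ℝ) (i : ι) : E :=
  φ (t + c i * h) - (∑ j, S1 i j • φ (t - h + c j * h)) - ∑ j, S2 i j • φ (t + c j * h)

/-- The nodes of two consecutive steps in units of the step size, relative to the current step:
`Sum.inl` is the current step and `Sum.inr` the previous one. -/
def extrapolationNode (c : ι → ℝ) : ι ⊕ ι → ℝ :=
  Sum.elim c fun j => c j - 1

variable [DecidableEq ι] {p : ℕ} {c : ι → ℝ} {S1 S2 : Matrix ι ι ℝ} {V0 V1 : Matrix ι (Fin p) ℝ}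

/-- The coefficients of the extrapolation error in the values of `φ` at the nodes
`extrapolationNode c`: row `i` represents the functional `φ ↦ (δ_n)_i`. -/
def extrapolationErrorCoeff (S1 S2 : Matrix ι ι ℝ) : Matrix ι (ι ⊕ ι) ℝ :=
  Matrix.fromCols (1 - S2) (-S1)

theorem extrapolationError_eq_sum (c : ι → ℝ) (S1 S2 : Matrix ι ι ℝ) (φ : ℝ → E) (t h : ℝ)
    (i : ι) :
    extrapolationError c S1 S2 φ t h i =
      ∑ j, extrapolationErrorCoeff S1 S2 i j • φ (t + extrapolationNode c j * h) := by
  have hprevious (j : ι) : t - h + c j * h = t + (c j - 1) * h := by ring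
  simp only [extrapolationError, extrapolationErrorCoeff, extrapolationNode, hprevious,
    Fintype.sum_sum_type, Matrix.fromCols_apply_inl, Matrix.fromCols_apply_inr, Sum.elim_inl,
    Sum.elim_inr, Matrix.sub_apply, Matrix.neg_apply, Matrix.one_apply, sub_smul, neg_smul,
    ite_smul, one_smul, zero_smul, sum_sub_distrib, sum_neg_distrib, sum_ite_eq, mem_univ, if_true]
  abel

theorem sum_extrapolationErrorCoeff_mul_node_pow_eq_zero (hV0 : ∀ i j, V0 i j = c i ^ (j : ℕ))
    (hV1 : ∀ i j, V1 i j = (c i - 1) ^ (j : ℕ)) (hext : S1 * V1 = (1 - S2) * V0) (i : ι) {k : ℕ}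
    (hk : k < p) : ∑ j, extrapolationErrorCoeff S1 S2 i j * extrapolationNode c j ^ k = 0 := by
  have hzero : extrapolationErrorCoeff S1 S2 * Matrix.fromRows V0 V1 = 0 := by
    rw [extrapolationErrorCoeff, Matrix.fromCols_mul_fromRows, Matrix.neg_mul, hext, add_neg_cancel]
  simpa [Matrix.mul_apply, extrapolationNode, hV0, hV1] using congrFun₂ hzero i ⟨k, hk⟩

theorem norm_extrapolationError_le {i : ι}
    (hexact : ∀ k < p, ∑ j, extrapolationErrorCoeff S1 S2 i j * extrapolationNode c j ^ k = 0)
    {φ : ℝ → E} {D : Set ℝ} {M : ℝ} (hD : Convex ℝ D) (hφ : ContDiffOn ℝ p φ D)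
    (hM : ∀ t ∈ D, ‖iteratedDerivWithin p φ D t‖ ≤ M) {t h : ℝ}
    (hmem : ∀ j, t - h + c j * h ∈ D ∧ t + c j * h ∈ D) :
    ‖extrapolationError c S1 S2 φ t h i‖ ≤
      (∑ j, |extrapolationErrorCoeff S1 S2 i j| * |extrapolationNode c j - c i| ^ p) * M *
        |h| ^ p := by
  have hnode : ∀ j, t + extrapolationNode c j * h ∈ D := by
    rintro (j | j)
    · exact (hmem j).2
    · convert (hmem j).1 using 1
      simp only [extrapolationNode, Sum.elim_inr]
      ring
  have hdist (j : ι ⊕ ι) : t + extrapolationNode c j * h - (t + c i * h) =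
      h * (extrapolationNode c j - c i) := by ring
  have hmoment (k : ℕ) (hk : k < p) : ∑ j, extrapolationErrorCoeff S1 S2 i j *
      (t + extrapolationNode c j * h - (t + c i * h)) ^ k = 0 := by
    simpa only [hdist, mul_sub, sub_eq_add_neg (h * _)] using
      sum_mul_affine_pow_eq_zero hexact h (-(h * c i)) hk
  rw [extrapolationError_eq_sum]
  refine (norm_sum_smul_le_of_sum_mul_sub_pow_eq_zero hD hφ hM (hmem i).2 hnode
    hmoment).trans_eq ?_
  simp only [hdist, abs_mul, mul_pow, mul_left_comm _ (|h| ^ p), ← mul_sum]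
  ring

theorem stmt_6_general (hV0 : ∀ i j, V0 i j = c i ^ (j : ℕ))
    (hV1 : ∀ i j, V1 i j = (c i - 1) ^ (j : ℕ)) (hext : S1 * V1 = (1 - S2) * V0) :
    ∃ K : ℝ, ∀ (E : Type*) [NormedAddCommGroup E] [NormedSpace ℝ E] (φ : ℝ → E) (D : Set ℝ) (M : ℝ),
      Convex ℝ D → ContDiffOn ℝ p φ D → (∀ t ∈ D, ‖iteratedDerivWithin p φ D t‖ ≤ M) →
      ∀ t h : ℝ, (∀ j, t - h + c j * h ∈ D ∧ t + c j * h ∈ D) →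
        ∀ i, ‖extrapolationError c S1 S2 φ t h i‖ ≤ K * M * |h| ^ p := by
  let stageConst (i : ι) : ℝ :=
    ∑ j, |extrapolationErrorCoeff S1 S2 i j| * |extrapolationNode c j - c i| ^ p
  refine ⟨∑ i, stageConst i, fun E _ _ φ D M hD hφ hM t h hmem i => ?_⟩
  have hM₀ : 0 ≤ M := (norm_nonneg _).trans (hM _ (hmem i).2)
  have hstage : stageConst i ≤ ∑ i, stageConst i :=
    single_le_sum (fun _ _ => by positivity) (mem_univ i)
  calc ‖extrapolationError c S1 S2 φ t h i‖
      ≤ stageConst i * M * |h| ^ p :=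
        norm_extrapolationError_le
          (fun _ => sum_extrapolationErrorCoeff_mul_node_pow_eq_zero hV0 hV1 hext i) hD hφ hM hmem
    _ ≤ (∑ i, stageConst i) * M * |h| ^ p := by gcongr

end Extrapolation

/-- If the extrapolation has stage order `s` (i.e. `S1 V1 = (I - S2) V0`),
then for any `C^s` function `φ` on `[a,b]` with `‖φ^{(s)}‖ ≤ M` there, the extrapolation
error is bounded by `K M Δt^s`, with `K` depending only on `c, S1, S2, s`. -/
theorem stmt_6 (s : ℕ) (hs : 1 ≤ s)
    (c : Fin s → ℝ) (hc : Function.Injective c)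
    (S1 S2 V0 V1 : Matrix (Fin s) (Fin s) ℝ)
    (hV0 : ∀ i j, V0 i j = c i ^ (j : ℕ))
    (hV1 : ∀ i j, V1 i j = (c i - 1) ^ (j : ℕ))
    (hext : S1 * V1 = (1 - S2) * V0) :
    ∃ K : ℝ, ∀ (m : ℕ) (φ : ℝ → EuclideanSpace ℝ (Fin m)) (a b M : ℝ), a < b →
      ContDiffOn ℝ (s : ℕ∞) φ (Set.Icc a b) →
      (∀ t ∈ Set.Icc a b, ‖iteratedDerivWithin s φ (Set.Icc a b) t‖ ≤ M) →
      ∀ Δt : ℝ, 0 < Δt → ∀ n : ℕ,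
        (∀ j : Fin s, ((n : ℝ) * Δt - Δt + c j * Δt) ∈ Set.Icc a b ∧
          ((n : ℝ) * Δt + c j * Δt) ∈ Set.Icc a b) →
        ∀ i : Fin s,
          ‖φ ((n : ℝ) * Δt + c i * Δt)
              - (∑ j, S1 i j • φ ((n : ℝ) * Δt - Δt + c j * Δt))
              - ∑ j, S2 i j • φ ((n : ℝ) * Δt + c j * Δt)‖ ≤ K * M * Δt ^ s := by
  obtain ⟨K, hK⟩ := stmt_6_general hV0 hV1 hext
  exact ⟨K, fun m φ a b M _ hφ hM Δt hΔt n hmem i => by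
    simpa only [extrapolationError, abs_of_pos hΔt] using
      hK _ φ _ M (convex_Icc a b) hφ hM (n * Δt) Δt hmem i⟩
end

section
/- (Theorem 1) Let the s-stage implicit Peer method with coefficients (c, P, R) be zero-stable (there exists K such that ‖P^n‖ ≤ K for all n ≥ 0), with pairwise distinct nodes 0 < c_i ≤ 1, c_s = 1, R lower triangular, P e = e, and stage order s, i.e. C V0 − P (C − I) V1 − R V0 D = 0. Let S2 be an arbitrary strictly lower triangular s×s real matrix and set R̂ = R S2 and Q̂ = R (I − S2) V0 V1^{−1}. Let F0, F1 : ℝ^m → ℝ^m be globally Lipschitz continuous and let u : [0, T+1] → ℝ^m be an (s+2) times continuously differentiable solution of u' = F0(u) + F1(u) such that t ↦ F0(u(t)) is (s+1) times continuously differentiable. Then there exist constants C' > 0 and h_0 > 0 such that for every step size Δt ∈ (0, h_0), every N with N Δt ≤ T, and every sequence w_0, w_1, …, w_N ∈ (ℝ^m)^s satisfying the IMEX-Peer recursion w_n = P w_{n−1} + Δt Q̂ F0(w_{n−1}) + Δt R̂ F0(w_n) + Δt R F1(w_n) for n = 1,…,N and the starting condition max_i ‖w_{0,i} − u(c_i Δt)‖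 ≤ Δt^s, one has max_{0 ≤ n ≤ N} max_i ‖w_{n,i} − u(nΔt + c_i Δt)‖ ≤ C' Δt^s; i.e. the IMEX-Peer scheme is convergent of order s for constant step size. -/
open Finset

/-!
The extrapolation `Q̂ v + R̂ v'` reproduces `R v'` on the stage values of polynomials of degree less
than `s`, so inserting the exact solution into the scheme leaves a defect of size `O(Δt ^ (s + 1))`:
that of the implicit method plus `Δt` times the extrapolation error of `F0 ∘ u`. Zero-stability
makes `v ↦ sup_n ‖Pⁿ v‖` an equivalent norm in which `P` is nonexpansive. In this norm the global
error grows per step by a factor `1 + O(Δt)` and a term `O(Δt ^ (s + 1))`, the Lipschitz dependence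
on the new stages being absorbed for small `Δt`, and the discrete Grönwall inequality sums these
contributions over the `O(1 / Δt)` steps.
-/

section

open Asymptotics Filter

section Taylor

variable {E : Type*} [NormedAddCommGroup E] [NormedSpace ℝ E] {f : ℝ → E} {a b : ℝ} {n : ℕ}

theorem norm_sub_taylorWithinEval_le {K x y : ℝ} (hab : a < b)
    (hf : ContDiffOn ℝ (n + 1) f (Set.Icc a b))
    (hK : ∀ z ∈ Set.Icc a b, ‖iteratedDerivWithin (n + 1) f (Set.Icc a b) z‖ ≤ K)
    (hx : x ∈ Set.Icc a b) (hy : y ∈ Set.Icc a b) :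
    ‖f y - taylorWithinEval f n (Set.Icc a b) x y‖ ≤ K * |y - x| ^ (n + 1) := by
  have hseg : Set.uIcc x y ⊆ Set.Icc a b := Set.uIcc_subset_Icc hx hy
  have hdiff : DifferentiableOn ℝ (iteratedDerivWithin n f (Set.Icc a b)) (Set.Icc a b) :=
    hf.differentiableOn_iteratedDerivWithin (mod_cast n.lt_succ_self) (uniqueDiffOn_Icc hab)
  have hderiv_le : ∀ z ∈ Set.uIcc x y, ‖((n.factorial : ℝ)⁻¹ * (y - z) ^ n) •
      iteratedDerivWithin (n + 1) f (Set.Icc a b) z‖ ≤ 1 * |y - x| ^ n * K := by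
    intro z hz
    have hdist : |y - z| ≤ |y - x| := Set.abs_sub_right_of_mem_uIcc hz
    have hfact : (n.factorial : ℝ)⁻¹ ≤ 1 := inv_le_one_of_one_le₀ (mod_cast n.factorial_pos)
    simp only [norm_smul, norm_mul, norm_pow, norm_inv, RCLike.norm_natCast, Real.norm_eq_abs]
    gcongr
    exact hK z (hseg hz)
  -- As a function of its base point, the Taylor polynomial evaluated at `y` runs from
  -- its value at `x` to `f y`.
  have hmvt := (convex_uIcc x y).norm_image_sub_le_of_norm_hasDerivWithin_le
    (f := fun z => taylorWithinEval f n (Set.Icc a b) z y)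
    (fun z hz => (hasDerivWithinAt_taylorWithinEval_at_Icc y hab (hseg hz) hf.of_succ hdiff).mono
      hseg) hderiv_le Set.left_mem_uIcc Set.right_mem_uIcc
  rw [taylorWithinEval_self, Real.norm_eq_abs] at hmvt
  exact hmvt.trans_eq (by ring)

theorem taylorWithinEval_eq_sum_smul_taylorCoeffWithin (f : ℝ → E) (n : ℕ) (s : Set ℝ)
    (x y : ℝ) : taylorWithinEval f n s x y =
      ∑ k ∈ range (n + 1), (y - x) ^ k • taylorCoeffWithin f k s x := by
  simp only [taylor_within_apply, taylorCoeffWithin, smul_smul, mul_comm]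

theorem taylorCoeffWithin_derivWithin (f : ℝ → E) (k : ℕ) (s : Set ℝ) (x : ℝ) :
    taylorCoeffWithin (derivWithin f s) k s x =
      ((k + 1 : ℕ) : ℝ) • taylorCoeffWithin f (k + 1) s x := by
  simp only [taylorCoeffWithin, smul_smul, iteratedDerivWithin_succ', Nat.factorial_succ]
  congr 1
  push_cast
  field_simp

theorem exists_norm_sub_sum_smul_taylorCoeffWithin_le (hab : a < b)
    (hf : ContDiffOn ℝ n f (Set.Icc a b)) :
    ∃ K, ∀ x ∈ Set.Icc a b, ∀ y ∈ Set.Icc a b,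
      ‖f y - ∑ k ∈ range n, (y - x) ^ k • taylorCoeffWithin f k (Set.Icc a b) x‖ ≤
        K * |y - x| ^ n := by
  obtain ⟨K, hK⟩ := isCompact_Icc.exists_bound_of_continuousOn
    (hf.continuousOn_iteratedDerivWithin le_rfl (uniqueDiffOn_Icc hab))
  refine ⟨K, fun x hx y hy => ?_⟩
  cases n with
  | zero => simpa using hK y hy
  | succ n =>
    rw [← taylorWithinEval_eq_sum_smul_taylorCoeffWithin]
    exact norm_sub_taylorWithinEval_le hab (mod_cast hf) hK hx hy

end Taylor

section Stencil

variable {E : Type*} [NormedAddCommGroup E] [NormedSpace ℝ E] {f : ℝ → E} {a b : ℝ} {n : ℕ}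
  {α κ ν : Type*} [Fintype κ] [Fintype ν] {l : Filter α} {x h : α → ℝ}

theorem isBigO_stencil_sub_taylor (hab : a < b) (hf : ContDiffOn ℝ n f (Set.Icc a b))
    (w d : κ → ℝ) (hx : ∀ᶠ q in l, x q ∈ Set.Icc a b)
    (hd : ∀ j, ∀ᶠ q in l, x q + d j * h q ∈ Set.Icc a b) :
    (fun q => (∑ j, w j • f (x q + d j * h q)) -
        ∑ k ∈ range n, (h q ^ k * ∑ j, w j * d j ^ k) • taylorCoeffWithin f k (Set.Icc a b) (x q))
      =O[l] fun q => h q ^ n := by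
  obtain ⟨K, hK⟩ := exists_norm_sub_sum_smul_taylorCoeffWithin_le hab hf
  have hpoint : ∀ j, (fun q => f (x q + d j * h q) -
      ∑ k ∈ range n, (d j * h q) ^ k • taylorCoeffWithin f k (Set.Icc a b) (x q))
        =O[l] fun q => h q ^ n := by
    intro j
    refine .of_bound (K * |d j| ^ n) ?_
    filter_upwards [hx, hd j] with q hxq hdq
    refine (by simpa using hK _ hxq _ hdq : _ ≤ K * |d j * h q| ^ n).trans_eq ?_
    rw [abs_mul, mul_pow, norm_pow, Real.norm_eq_abs, mul_assoc]
  refine (IsBigO.sum fun j (_ : j ∈ univ) => (hpoint j).const_smul_left (w j)).congr_left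
    fun q => ?_
  simp only [Finset.sum_apply, Pi.smul_apply, smul_sub, sum_sub_distrib, smul_sum, mul_sum,
    sum_smul, smul_smul]
  rw [sum_comm]
  congr! 4
  ring

theorem isBigO_stencil_of_moments_eq_zero (hab : a < b) (hf : ContDiffOn ℝ n f (Set.Icc a b))
    {w d : κ → ℝ} (hmoments : ∀ k < n, ∑ j, w j * d j ^ k = 0)
    (hx : ∀ᶠ q in l, x q ∈ Set.Icc a b)
    (hd : ∀ j, ∀ᶠ q in l, x q + d j * h q ∈ Set.Icc a b) :
    (fun q => ∑ j, w j • f (x q + d j * h q)) =O[l] fun q => h q ^ n := by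
  refine (isBigO_stencil_sub_taylor hab hf w d hx hd).congr_left fun q => ?_
  refine sub_eq_self.2 (sum_eq_zero fun k hk => ?_)
  rw [hmoments k (mem_range.1 hk), mul_zero, zero_smul]

theorem isBigO_hermiteStencil_of_moments_eq_zero (hab : a < b)
    (hf : ContDiffOn ℝ (n + 1) f (Set.Icc a b)) {w d : κ → ℝ} {v e : ν → ℝ}
    (hmoments : ∀ k ≤ n, ∑ j, w j * d j ^ k + k * ∑ j, v j * e j ^ (k - 1) = 0)
    (hx : ∀ᶠ q in l, x q ∈ Set.Icc a b)
    (hd : ∀ j, ∀ᶠ q in l, x q + d j * h q ∈ Set.Icc a b)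
    (he : ∀ j, ∀ᶠ q in l, x q + e j * h q ∈ Set.Icc a b) :
    (fun q => ∑ j, w j • f (x q + d j * h q) +
        h q • ∑ j, v j • derivWithin f (Set.Icc a b) (x q + e j * h q))
      =O[l] fun q => h q ^ (n + 1) := by
  have hf' : ContDiffOn ℝ n (derivWithin f (Set.Icc a b)) (Set.Icc a b) :=
    hf.derivWithin (uniqueDiffOn_Icc hab) le_rfl
  have hvalues := isBigO_stencil_sub_taylor (n := n + 1) hab (mod_cast hf) w d hx hd
  have hderivs := (isBigO_refl h l).smul (isBigO_stencil_sub_taylor hab hf' v e hx he)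
  simp only [smul_eq_mul, ← pow_succ'] at hderivs
  refine (hvalues.add hderivs).congr_left fun q => ?_
  have hcancel : ∑ k ∈ range (n + 1), (h q ^ k * ∑ j, w j * d j ^ k) •
        taylorCoeffWithin f k (Set.Icc a b) (x q) +
      h q • ∑ k ∈ range n, (h q ^ k * ∑ j, v j * e j ^ k) •
        taylorCoeffWithin (derivWithin f (Set.Icc a b)) k (Set.Icc a b) (x q) = 0 := by
    have hzeroth : ∑ j, w j = 0 := by simpa using hmoments 0 n.zero_le
    rw [sum_range_succ', smul_sum]
    simp only [pow_zero, mul_one, hzeroth, mul_zero, zero_smul, add_zero, ← sum_add_distrib]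
    refine sum_eq_zero fun k hk => ?_
    rw [taylorCoeffWithin_derivWithin, smul_smul, smul_smul, ← add_smul]
    refine smul_eq_zero_of_left ?_ _
    have hsucc := hmoments (k + 1) (mem_range.1 hk)
    rw [Nat.add_sub_cancel] at hsucc
    linear_combination h q ^ (k + 1) * hsucc
  rw [smul_sub, sub_add_sub_comm, hcancel, sub_zero]

end Stencil

section PowerBounded

variable {R V : Type*} [Monoid R] [SeminormedAddCommGroup V] [DistribMulAction R V] {P : R}
  {K : ℝ}

/-- The seminorm `v ↦ sup_n ‖Pⁿ v‖`. When the powers of `P` are uniformly bounded it is equivalent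
to the original norm, and `P` is nonexpansive for it; otherwise the supremum may be the junk
value `0`. -/
noncomputable def orbitNorm (P : R) (v : V) : ℝ :=
  ⨆ n : ℕ, ‖P ^ n • v‖

variable (hP : ∀ (n : ℕ) (v : V), ‖P ^ n • v‖ ≤ K * ‖v‖)
include hP

theorem bddAbove_range_norm_pow_smul (v : V) : BddAbove (Set.range fun n : ℕ => ‖P ^ n • v‖) :=
  ⟨K * ‖v‖, Set.forall_mem_range.2 fun n => hP n v⟩

theorem norm_pow_smul_le_orbitNorm (n : ℕ) (v : V) : ‖P ^ n • v‖ ≤ orbitNorm P v :=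
  le_ciSup (bddAbove_range_norm_pow_smul hP v) n

theorem norm_le_orbitNorm (v : V) : ‖v‖ ≤ orbitNorm P v := by
  simpa using norm_pow_smul_le_orbitNorm hP 0 v

theorem orbitNorm_le (v : V) : orbitNorm P v ≤ K * ‖v‖ :=
  ciSup_le fun n => hP n v

theorem orbitNorm_smul_le (v : V) : orbitNorm P (P • v) ≤ orbitNorm P v :=
  ciSup_le fun n => by
    rw [← mul_smul, ← pow_succ]
    exact norm_pow_smul_le_orbitNorm hP (n + 1) v

theorem orbitNorm_add_le (v v' : V) : orbitNorm P (v + v') ≤ orbitNorm P v + orbitNorm P v' :=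
  ciSup_le fun n => by
    rw [smul_add]
    exact norm_add_le_of_le (norm_pow_smul_le_orbitNorm hP n v)
      (norm_pow_smul_le_orbitNorm hP n v')

theorem orbitNorm_succ_le {a β : ℝ} (hK : 0 ≤ K) (ha : 0 ≤ a) (hβ : 0 ≤ β)
    (hKa : K * a ≤ 1 / 2) {v v' : V} (h : ‖v' - P • v‖ ≤ a * (‖v‖ + ‖v'‖) + β) :
    orbitNorm P v' ≤ (1 + 4 * (K * a)) * orbitNorm P v + 2 * (K * β) := by
  have hv := norm_le_orbitNorm hP v
  have hv' := norm_le_orbitNorm hP v'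
  have himplicit : orbitNorm P v' ≤
      orbitNorm P v + K * (a * (orbitNorm P v + orbitNorm P v') + β) := calc
    orbitNorm P v' = orbitNorm P (P • v + (v' - P • v)) := by rw [add_sub_cancel]
    _ ≤ orbitNorm P v + K * ‖v' - P • v‖ :=
      (orbitNorm_add_le hP _ _).trans (add_le_add (orbitNorm_smul_le hP v) (orbitNorm_le hP _))
    _ ≤ _ := by gcongr; exact h.trans (by gcongr)
  have hv0 : 0 ≤ orbitNorm P v := (norm_nonneg v).trans hv
  have hKa0 : 0 ≤ K * a := mul_nonneg hK ha
  have hKβ : 0 ≤ K * β := mul_nonneg hK hβ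
  -- Absorb the implicit term: `1 + x ≤ (1 - x) (1 + 4 x)` and `1 ≤ 2 (1 - x)` for `x ∈ [0, 1/2]`.
  have hpos : 0 < 1 - K * a := by linarith
  refine le_of_mul_le_mul_left ?_ hpos
  nlinarith [mul_nonneg hv0 (mul_nonneg hKa0 (sub_nonneg.2 hKa)),
    mul_nonneg hKβ (sub_nonneg.2 hKa)]

theorem norm_le_of_powerBounded_recursion {a β : ℝ} (hK : 0 ≤ K) (ha : 0 ≤ a) (hβ : 0 ≤ β)
    (hKa : K * a ≤ 1 / 2) {N : ℕ} {e : ℕ → V}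
    (he : ∀ n < N, ‖e (n + 1) - P • e n‖ ≤ a * (‖e n‖ + ‖e (n + 1)‖) + β) {n : ℕ} (hn : n ≤ N) :
    ‖e n‖ ≤ K * (‖e 0‖ + 2 * (n * β)) * Real.exp (4 * K * (n * a)) := by
  have hgrowth : ∀ k ≥ 0, orbitNorm P (e (min (k + 1) n)) ≤
      (1 + 4 * (K * a)) * orbitNorm P (e (min k n)) + 2 * (K * β) := by
    intro k _
    rcases lt_or_ge k n with hk | hk
    · rw [min_eq_left hk.le, min_eq_left hk]
      exact orbitNorm_succ_le hP hK ha hβ hKa (he k (hk.trans_le hn))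
    · rw [min_eq_right hk, min_eq_right (hk.trans k.le_succ)]
      have := (norm_nonneg _).trans (norm_le_orbitNorm hP (e n))
      have : 0 ≤ 4 * (K * a) * orbitNorm P (e n) + 2 * (K * β) := by positivity
      linarith
  have hgronwall := discrete_gronwall (u := fun k => orbitNorm P (e (min k n)))
    (b := fun _ => 2 * (K * β)) (c := fun _ => 4 * (K * a))
    ((norm_nonneg _).trans (norm_le_orbitNorm hP _)) hgrowth
    (fun _ _ => by positivity) (fun _ _ => by positivity) n.zero_le
  simp only [min_self, Nat.zero_min, sum_const, Nat.card_Ico, tsub_zero, nsmul_eq_mul]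
    at hgronwall
  calc ‖e n‖ ≤ _ := (norm_le_orbitNorm hP _).trans hgronwall
    _ ≤ (K * ‖e 0‖ + n * (2 * (K * β))) * Real.exp (n * (4 * (K * a))) := by
      gcongr
      exact orbitNorm_le hP (e 0)
    _ = _ := by ring_nf

end PowerBounded

/-- Coefficients `(c, P, Q̂, R̂, R)` of an IMEX-Peer method whose stages are indexed by `ι`. The
extrapolation matrices `Q̂` and `R̂` act on the explicit part `F0`, and `R` on the implicit part
`F1`. -/
structure IMEXPeer (ι : Type*) where
  nodes : ι → ℝ
  P : Matrix ι ι ℝ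
  Qhat : Matrix ι ι ℝ
  Rhat : Matrix ι ι ℝ
  R : Matrix ι ι ℝ

namespace IMEXPeer

open scoped Matrix.Module

variable {ι E : Type*} [Fintype ι] [DecidableEq ι] [NormedAddCommGroup E] [NormedSpace ℝ E]

/-- Zero-stability: the powers of `P` are bounded. The bound is on the entries, which is the same
as boundedness in any matrix norm. -/
def ZeroStable (M : IMEXPeer ι) : Prop :=
  ∃ K : ℝ, ∀ (n : ℕ) (i j : ι), |(M.P ^ n) i j| ≤ K

/-- The underlying implicit method (all of the right-hand side treated by `R`) is exact for
polynomial solutions of degree at most `p`, with time measured from `t_n` in units of `Δt`. The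
case `k = 0` is the preconsistency condition `P e = e`. -/
def StageOrder (M : IMEXPeer ι) (p : ℕ) : Prop :=
  ∀ i, ∀ k ≤ p, M.nodes i ^ k =
    ∑ j, M.P i j * (M.nodes j - 1) ^ k + k * ∑ j, M.R i j * M.nodes j ^ (k - 1)

/-- On polynomials of degree less than `p`, the explicit combination given by `Q̂` (old stages) and
`R̂` (new stages) agrees with the implicit one given by `R`. -/
def ExtrapolationOrder (M : IMEXPeer ι) (p : ℕ) : Prop :=
  ∀ i, ∀ k < p, ∑ j, M.Qhat i j * (M.nodes j - 1) ^ k + ∑ j, M.Rhat i j * M.nodes j ^ k =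
    ∑ j, M.R i j * M.nodes j ^ k

/-- The values of `u` at the stage times `t + c_i Δt`. -/
def stageValues (M : IMEXPeer ι) (u : ℝ → E) (Δt t : ℝ) : ι → E :=
  fun i => u (t + M.nodes i * Δt)

/-- The residual of one step of the method from the stages `v` to the stages `v'`. -/
def defect (M : IMEXPeer ι) (F0 F1 : E → E) (Δt : ℝ) (v v' : ι → E) : ι → E :=
  v' - (M.P • v + Δt • M.Qhat • (F0 ∘ v) + Δt • M.Rhat • (F0 ∘ v') + Δt • M.R • (F1 ∘ v'))

/-- The sequence `w` of stage vectors satisfies the first `N` steps of the method. -/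
def IsNumericalSolution (M : IMEXPeer ι) (F0 F1 : E → E) (Δt : ℝ) (N : ℕ) (w : ℕ → ι → E) :
    Prop :=
  ∀ n < N, M.defect F0 F1 Δt (w n) (w (n + 1)) = 0

/-- The difference between the stages `w n` and the values of `u` at the stage times `(n + c_i) Δt`
they approximate. -/
def globalError (M : IMEXPeer ι) (u : ℝ → E) (Δt : ℝ) (w : ℕ → ι → E) (n : ℕ) : ι → E :=
  w n - M.stageValues u Δt (n * Δt)

end IMEXPeer

theorem norm_comp_sub_comp_le_of_lipschitzWith {ι E E' : Type*} [Fintype ι]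
    [SeminormedAddCommGroup E] [SeminormedAddCommGroup E'] {F : E → E'} {L : NNReal}
    (hF : LipschitzWith L F) (v w : ι → E) : ‖F ∘ v - F ∘ w‖ ≤ L * ‖v - w‖ :=
  (pi_norm_le_iff_of_nonneg (by positivity)).2 fun i =>
    (hF.norm_sub_le _ _).trans (by gcongr; exact norm_le_pi_norm (v - w) i)

open scoped Matrix.Norms.Operator in
theorem matrix_norm_le_card_mul {ι : Type*} [Fintype ι] {A : Matrix ι ι ℝ} {K : ℝ} (hK : 0 ≤ K)
    (hA : ∀ i j, |A i j| ≤ K) : ‖A‖ ≤ Fintype.card ι * K := by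
  lift K to NNReal using hK
  rw [← coe_nnnorm A, Matrix.linfty_opNNNorm_def]
  norm_cast
  refine Finset.sup_le fun i _ => ?_
  rw [← nsmul_eq_mul]
  exact sum_le_card_nsmul _ _ _ fun j _ => hA i j

section StageVectors

open scoped Matrix.Module Matrix.Norms.Operator

variable {ι E : Type*} [Fintype ι] [DecidableEq ι] [NormedAddCommGroup E] [NormedSpace ℝ E]

theorem norm_matrix_smul_le (A : Matrix ι ι ℝ) (v : ι → E) : ‖A • v‖ ≤ ‖A‖ * ‖v‖ := by
  refine (pi_norm_le_iff_of_nonneg (by positivity)).2 fun i => ?_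
  have hrow : ∑ j, ‖A i j‖ ≤ ‖A‖ := by
    rw [← coe_nnnorm A, Matrix.linfty_opNNNorm_def]
    simpa using NNReal.coe_le_coe.2 (le_sup (f := fun i => ∑ j, ‖A i j‖₊) (mem_univ i))
  calc ‖∑ j, A i j • v j‖ ≤ ∑ j, ‖A i j‖ * ‖v‖ := norm_sum_le_of_le _ fun j _ => by
        rw [norm_smul]
        gcongr
        exact norm_le_pi_norm v j
    _ = (∑ j, ‖A i j‖) * ‖v‖ := (sum_mul ..).symm
    _ ≤ ‖A‖ * ‖v‖ := by gcongr

theorem norm_smul_matrix_smul_comp_sub_comp_le (A : Matrix ι ι ℝ) {F : E → E} {L : NNReal}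
    (hF : LipschitzWith L F) {Δt : ℝ} (hΔt : 0 ≤ Δt) (v w : ι → E) :
    ‖Δt • A • (F ∘ v - F ∘ w)‖ ≤ Δt * (‖A‖ * L) * ‖v - w‖ := by
  rw [norm_smul, Real.norm_of_nonneg hΔt, mul_assoc, mul_assoc]
  gcongr
  exact (norm_matrix_smul_le A _).trans (by
    gcongr; exact norm_comp_sub_comp_le_of_lipschitzWith hF v w)

end StageVectors

namespace IMEXPeer

open scoped Matrix.Module

variable {ι E : Type*} [Fintype ι] [DecidableEq ι] [NormedAddCommGroup E] [NormedSpace ℝ E]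
  {M : IMEXPeer ι} {p : ℕ}

theorem ZeroStable.exists_norm_pow_smul_le (hM : M.ZeroStable) :
    ∃ K : ℝ, 0 ≤ K ∧ ∀ (n : ℕ) (v : ι → E), ‖M.P ^ n • v‖ ≤ K * ‖v‖ := by
  obtain ⟨K, hK⟩ := hM
  refine ⟨Fintype.card ι * |K|, by positivity, fun n v => (norm_matrix_smul_le _ v).trans ?_⟩
  gcongr
  exact matrix_norm_le_card_mul (abs_nonneg K) fun i j => (hK n i j).trans (le_abs_self K)

theorem exists_norm_error_step_le (M : IMEXPeer ι) {F0 F1 : E → E} {L0 L1 : NNReal}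
    (hF0 : LipschitzWith L0 F0) (hF1 : LipschitzWith L1 F1) :
    ∃ A : ℝ, 0 ≤ A ∧ ∀ Δt : ℝ, 0 ≤ Δt → ∀ v v' w w' : ι → E,
      ‖(w' - v') - M.P • (w - v)‖ ≤ Δt * A * (‖w - v‖ + ‖w' - v'‖) +
        ‖M.defect F0 F1 Δt w w' - M.defect F0 F1 Δt v v'‖ := by
  open scoped Matrix.Norms.Operator in
  refine ⟨‖M.Qhat‖ * L0 + ‖M.Rhat‖ * L0 + ‖M.R‖ * L1, by positivity,
    fun Δt hΔt v v' w w' => ?_⟩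
  have hsplit : (w' - v') - M.P • (w - v) =
      Δt • M.Qhat • (F0 ∘ w - F0 ∘ v) + Δt • M.Rhat • (F0 ∘ w' - F0 ∘ v') +
        Δt • M.R • (F1 ∘ w' - F1 ∘ v') +
        (M.defect F0 F1 Δt w w' - M.defect F0 F1 Δt v v') := by
    simp only [defect, smul_sub]
    abel
  rw [hsplit]
  refine (norm_add_le_of_le (norm_add_le_of_le (norm_add_le_of_le
    (norm_smul_matrix_smul_comp_sub_comp_le M.Qhat hF0 hΔt w v)
    (norm_smul_matrix_smul_comp_sub_comp_le M.Rhat hF0 hΔt w' v'))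
    (norm_smul_matrix_smul_comp_sub_comp_le M.R hF1 hΔt w' v')) le_rfl).trans ?_
  gcongr
  have hold : 0 ≤ Δt * (‖M.Qhat‖ * L0) * ‖w' - v'‖ := by positivity
  have hnew : 0 ≤ Δt * (‖M.Rhat‖ * L0 + ‖M.R‖ * L1) * ‖w - v‖ := by positivity
  linarith

section Consistency

variable {a b : ℝ} {α : Type*} {l : Filter α} {Δt t : α → ℝ}

theorem StageOrder.isBigO_implicitDefect (hM : M.StageOrder p) {u : ℝ → E} (hab : a < b)
    (hu : ContDiffOn ℝ (p + 1) u (Set.Icc a b))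
    (ht : ∀ᶠ q in l, t q + Δt q ∈ Set.Icc a b)
    (hold : ∀ i, ∀ᶠ q in l, t q + M.nodes i * Δt q ∈ Set.Icc a b)
    (hnew : ∀ i, ∀ᶠ q in l, t q + Δt q + M.nodes i * Δt q ∈ Set.Icc a b) :
    (fun q => M.stageValues u (Δt q) (t q + Δt q) - M.P • M.stageValues u (Δt q) (t q) -
        Δt q • M.R • M.stageValues (derivWithin u (Set.Icc a b)) (Δt q) (t q + Δt q))
      =O[l] fun q => Δt q ^ (p + 1) := by
  have hshift : ∀ q j, t q + Δt q + (M.nodes j - 1) * Δt q = t q + M.nodes j * Δt q :=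
    fun q j => by ring
  refine isBigO_pi.2 fun i => ?_
  have hstencil := isBigO_hermiteStencil_of_moments_eq_zero (κ := Option ι) hab hu
    (w := fun o => o.elim 1 fun j => -M.P i j)
    (d := fun o => o.elim (M.nodes i) fun j => M.nodes j - 1)
    (v := fun j => -M.R i j) (e := M.nodes) (x := fun q => t q + Δt q) (h := Δt) (l := l)
    (fun k hk => by simp [Fintype.sum_option, hM i k hk]) ht
    (Option.forall.2 ⟨hnew i, by simpa only [Option.elim_some, hshift] using hold⟩) hnew
  refine hstencil.congr_left fun q => ?_
  simp only [Fintype.sum_option, Option.elim_none, Option.elim_some, one_smul, neg_smul,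
    sum_neg_distrib, hshift, smul_neg, ← sub_eq_add_neg]
  rfl

theorem ExtrapolationOrder.isBigO_extrapolationDefect (hM : M.ExtrapolationOrder p) {φ : ℝ → E}
    (hab : a < b) (hφ : ContDiffOn ℝ p φ (Set.Icc a b))
    (ht : ∀ᶠ q in l, t q + Δt q ∈ Set.Icc a b)
    (hold : ∀ i, ∀ᶠ q in l, t q + M.nodes i * Δt q ∈ Set.Icc a b)
    (hnew : ∀ i, ∀ᶠ q in l, t q + Δt q + M.nodes i * Δt q ∈ Set.Icc a b) :
    (fun q => M.Qhat • M.stageValues φ (Δt q) (t q) +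
        (M.Rhat - M.R) • M.stageValues φ (Δt q) (t q + Δt q))
      =O[l] fun q => Δt q ^ p := by
  have hshift : ∀ q j, t q + Δt q + (M.nodes j - 1) * Δt q = t q + M.nodes j * Δt q :=
    fun q j => by ring
  refine isBigO_pi.2 fun i => ?_
  have hstencil := isBigO_stencil_of_moments_eq_zero (κ := ι ⊕ ι) hab hφ
    (w := Sum.elim (M.Qhat i) fun j => M.Rhat i j - M.R i j)
    (d := Sum.elim (fun j => M.nodes j - 1) M.nodes) (x := fun q => t q + Δt q) (h := Δt) (l := l)
    (fun k hk => by simp [Fintype.sum_sum_type, sub_mul, ← add_sub_assoc, hM i k hk]) ht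
    (Sum.forall.2 ⟨by simpa only [Sum.elim_inl, hshift] using hold, hnew⟩)
  refine hstencil.congr_left fun q => ?_
  simp only [Fintype.sum_sum_type, Sum.elim_inl, Sum.elim_inr, hshift]
  rfl

theorem isBigO_defect_stageValues (hstage : M.StageOrder p) (hextra : M.ExtrapolationOrder p)
    {F0 F1 : E → E} {u : ℝ → E} (hab : a < b) (hu : ContDiffOn ℝ (p + 1) u (Set.Icc a b))
    (hφ : ContDiffOn ℝ p (F0 ∘ u) (Set.Icc a b))
    (hode : ∀ s ∈ Set.Icc a b, HasDerivWithinAt u (F0 (u s) + F1 (u s)) (Set.Icc a b) s)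
    (ht : ∀ᶠ q in l, t q + Δt q ∈ Set.Icc a b)
    (hold : ∀ i, ∀ᶠ q in l, t q + M.nodes i * Δt q ∈ Set.Icc a b)
    (hnew : ∀ i, ∀ᶠ q in l, t q + Δt q + M.nodes i * Δt q ∈ Set.Icc a b) :
    (fun q => M.defect F0 F1 (Δt q) (M.stageValues u (Δt q) (t q))
        (M.stageValues u (Δt q) (t q + Δt q)))
      =O[l] fun q => Δt q ^ (p + 1) := by
  have himplicit := hstage.isBigO_implicitDefect hab hu ht hold hnew
  have hextrapolation := (isBigO_refl Δt l).smul
    (hextra.isBigO_extrapolationDefect hab hφ ht hold hnew)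
  simp only [smul_eq_mul, ← pow_succ'] at hextrapolation
  refine (himplicit.sub hextrapolation).congr' ?_ .rfl
  filter_upwards [eventually_all.2 hnew] with q hq
  have hderiv : M.stageValues (derivWithin u (Set.Icc a b)) (Δt q) (t q + Δt q) =
      F0 ∘ M.stageValues u (Δt q) (t q + Δt q) + F1 ∘ M.stageValues u (Δt q) (t q + Δt q) :=
    funext fun i => (hode _ (hq i)).derivWithin (uniqueDiffOn_Icc hab _ (hq i))
  have hcomp : ∀ s, M.stageValues (F0 ∘ u) (Δt q) s = F0 ∘ M.stageValues u (Δt q) s :=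
    fun s => rfl
  simp only [defect, hderiv, hcomp, smul_add, sub_smul, smul_sub]
  abel

end Consistency

theorem exists_norm_defect_stageValues_le (hc : ∀ i, M.nodes i ∈ Set.Icc 0 1)
    (hstage : M.StageOrder p) (hextra : M.ExtrapolationOrder p) {F0 F1 : E → E} {u : ℝ → E}
    {B : ℝ} (hB : 0 < B) (hu : ContDiffOn ℝ (p + 1) u (Set.Icc 0 B))
    (hφ : ContDiffOn ℝ p (F0 ∘ u) (Set.Icc 0 B))
    (hode : ∀ s ∈ Set.Icc 0 B, HasDerivWithinAt u (F0 (u s) + F1 (u s)) (Set.Icc 0 B) s) :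
    ∃ D : ℝ, 0 ≤ D ∧ ∀ Δt t : ℝ, 0 ≤ Δt → 0 ≤ t → t + 2 * Δt ≤ B →
      ‖M.defect F0 F1 Δt (M.stageValues u Δt t) (M.stageValues u Δt (t + Δt))‖ ≤
        D * Δt ^ (p + 1) := by
  let S : Set (ℝ × ℝ) := {q | 0 ≤ q.1 ∧ 0 ≤ q.2 ∧ q.2 + 2 * q.1 ≤ B}
  have hstages : ∀ θ ∈ Set.Icc (0 : ℝ) 2, ∀ᶠ q in 𝓟 S, q.2 + θ * q.1 ∈ Set.Icc 0 B := by
    rintro θ ⟨hθ0, hθ2⟩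
    filter_upwards [mem_principal_self S] with q ⟨hΔt, ht, hB⟩
    exact ⟨by positivity, by nlinarith⟩
  obtain ⟨D, hD0, hD⟩ := (isBigO_defect_stageValues (l := 𝓟 S) (Δt := Prod.fst) (t := Prod.snd)
    hstage hextra hB hu hφ hode
    (by simpa using hstages 1 (by norm_num))
    (fun i => hstages _ ⟨(hc i).1, by linarith [(hc i).2]⟩)
    (fun i => by
      simpa only [add_mul, one_mul, add_assoc] using
        hstages (1 + M.nodes i) ⟨by linarith [(hc i).1], by linarith [(hc i).2]⟩)).exists_nonneg
  refine ⟨D, hD0, fun Δt t hΔt ht htB => ?_⟩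
  simpa [abs_of_nonneg hΔt] using isBigOWith_principal.1 hD (Δt, t) ⟨hΔt, ht, htB⟩

theorem exists_norm_globalError_step_le (hc : ∀ i, M.nodes i ∈ Set.Icc 0 1)
    (hstage : M.StageOrder p) (hextra : M.ExtrapolationOrder p) {F0 F1 : E → E} {L0 L1 : NNReal}
    (hF0 : LipschitzWith L0 F0) (hF1 : LipschitzWith L1 F1) {u : ℝ → E} {B : ℝ} (hB : 0 < B)
    (hu : ContDiffOn ℝ (p + 1) u (Set.Icc 0 B)) (hφ : ContDiffOn ℝ p (F0 ∘ u) (Set.Icc 0 B))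
    (hode : ∀ s ∈ Set.Icc 0 B, HasDerivWithinAt u (F0 (u s) + F1 (u s)) (Set.Icc 0 B) s) :
    ∃ A ≥ 0, ∃ D ≥ 0, ∀ Δt : ℝ, 0 ≤ Δt → ∀ N : ℕ, N * Δt + Δt ≤ B →
      ∀ w : ℕ → ι → E, M.IsNumericalSolution F0 F1 Δt N w → ∀ n < N,
        ‖M.globalError u Δt w (n + 1) - M.P • M.globalError u Δt w n‖ ≤
          Δt * A * (‖M.globalError u Δt w n‖ + ‖M.globalError u Δt w (n + 1)‖) +
            D * Δt ^ (p + 1) := by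
  obtain ⟨A, hA, hstep⟩ := M.exists_norm_error_step_le hF0 hF1
  obtain ⟨D, hD, hdefect⟩ := exists_norm_defect_stageValues_le hc hstage hextra hB hu hφ hode
  refine ⟨A, hA, D, hD, fun Δt hΔt N hN w hw n hn => (hstep Δt hΔt _ _ _ _).trans ?_⟩
  have hlast : (n + 1 : ℕ) * Δt ≤ N * Δt := by gcongr; exact hn
  have hnext : (n + 1 : ℕ) * Δt = n * Δt + Δt := by push_cast; ring
  rw [hw n hn, zero_sub, norm_neg]
  refine add_le_add_right ?_ _
  rw [hnext] at hlast ⊢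
  exact hdefect Δt _ hΔt (by positivity) (by linarith)

end IMEXPeer

section Convergence

open scoped Matrix.Module

theorem stmt_11_general {ι E : Type*} [Fintype ι] [DecidableEq ι] [NormedAddCommGroup E]
    [NormedSpace ℝ E] (M : IMEXPeer ι) {p : ℕ} {T B : ℝ} (hT : 0 ≤ T) (hTB : T < B)
    (hc : ∀ i, M.nodes i ∈ Set.Icc 0 1) (hzero : M.ZeroStable) (hstage : M.StageOrder p)
    (hextra : M.ExtrapolationOrder p) {F0 F1 : E → E} {L0 L1 : NNReal}
    (hF0 : LipschitzWith L0 F0) (hF1 : LipschitzWith L1 F1) {u : ℝ → E}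
    (hu : ContDiffOn ℝ (p + 1) u (Set.Icc 0 B)) (hφ : ContDiffOn ℝ p (F0 ∘ u) (Set.Icc 0 B))
    (hode : ∀ t ∈ Set.Icc 0 B, HasDerivWithinAt u (F0 (u t) + F1 (u t)) (Set.Icc 0 B) t) :
    ∃ C > 0, ∃ h0 > 0, ∀ Δt : ℝ, 0 < Δt → Δt < h0 → ∀ N : ℕ, N * Δt ≤ T →
      ∀ w : ℕ → ι → E, M.IsNumericalSolution F0 F1 Δt N w → ∀ n ≤ N,
        ‖M.globalError u Δt w n‖ ≤
          C * (‖M.globalError u Δt w 0‖ + Δt ^ p) := by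
  obtain ⟨K, hK, hP⟩ := hzero.exists_norm_pow_smul_le (E := E)
  obtain ⟨A, hA, D, hD, hrecursion⟩ := IMEXPeer.exists_norm_globalError_step_le hc hstage hextra
    hF0 hF1 (hT.trans_lt hTB) hu hφ hode
  refine ⟨(K + 1) * (1 + 2 * (T * D)) * Real.exp (4 * K * (T * A)), by positivity,
    min (1 / (2 * (K * A + 1))) (B - T), lt_min (by positivity) (sub_pos.2 hTB), ?_⟩
  intro Δt hΔt hΔt0 N hN w hw n hn
  have hKA : K * (Δt * A) ≤ 1 / 2 := by
    have := (lt_div_iff₀ (by positivity)).1 (hΔt0.trans_le (min_le_left ..))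
    linarith
  have hNB : N * Δt + Δt ≤ B := by linarith [hΔt0.trans_le (min_le_right ..)]
  have hstable := norm_le_of_powerBounded_recursion hP hK (by positivity) (by positivity) hKA
    (hrecursion Δt hΔt.le N hNB w hw) hn
  have hnT : n * Δt ≤ T := hN.trans' (by gcongr)
  calc ‖M.globalError u Δt w n‖
    _ ≤ K * (‖M.globalError u Δt w 0‖ + 2 * (n * Δt * D * Δt ^ p)) *
          Real.exp (4 * K * (n * Δt * A)) := hstable.trans_eq (by ring_nf)
    _ ≤ (K + 1) * (‖M.globalError u Δt w 0‖ + 2 * (T * D * Δt ^ p)) *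
          Real.exp (4 * K * (T * A)) := by gcongr; exact le_add_of_nonneg_right zero_le_one
    _ ≤ (K + 1) * ((1 + 2 * (T * D)) * (‖M.globalError u Δt w 0‖ + Δt ^ p)) *
          Real.exp (4 * K * (T * A)) := by
        gcongr
        have : 0 ≤ 2 * (T * D) * ‖M.globalError u Δt w 0‖ := by positivity
        linarith [pow_pos hΔt p]
    _ = _ := by ring

end Convergence

namespace IMEXPeer

variable {s : ℕ} {M : IMEXPeer (Fin s)}

theorem stageOrder_of_vandermonde (hpre : ∀ i, ∑ j, M.P i j = 1)
    (hstage : Matrix.diagonal M.nodes * Matrix.vandermonde M.nodes -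
      M.P * (Matrix.diagonal M.nodes - 1) * Matrix.vandermonde (M.nodes - 1) -
      M.R * Matrix.vandermonde M.nodes * Matrix.diagonal (fun j : Fin s => (j : ℝ) + 1) = 0) :
    M.StageOrder s := by
  intro i k hk
  cases k with
  | zero => simp [hpre i]
  | succ k =>
    have hentry := congr_fun (congr_fun hstage i) ⟨k, hk⟩
    rw [← Matrix.diagonal_one, Matrix.diagonal_sub, Matrix.mul_assoc M.P] at hentry
    simp only [Matrix.sub_apply, Matrix.diagonal_mul, Matrix.mul_diagonal,
      Matrix.mul_apply (M := M.P), Matrix.mul_apply (M := M.R), Matrix.vandermonde_apply,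
      Pi.sub_apply, Pi.one_apply, Matrix.zero_apply, ← pow_succ'] at hentry
    rw [Nat.add_sub_cancel, Nat.cast_succ]
    linear_combination hentry

theorem extrapolationOrder_of_vandermonde (hc : Function.Injective M.nodes)
    {S : Matrix (Fin s) (Fin s) ℝ} (hRhat : M.Rhat = M.R * S)
    (hQhat : M.Qhat = M.R * ((1 - S) * Matrix.vandermonde M.nodes *
      (Matrix.vandermonde (M.nodes - 1))⁻¹)) :
    M.ExtrapolationOrder s := by
  have hunit : IsUnit (Matrix.vandermonde (M.nodes - 1)).det :=
    (Matrix.det_vandermonde_ne_zero_iff.2 fun _ _ h => hc (sub_left_injective h)).isUnit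
  have hmatrix : M.Qhat * Matrix.vandermonde (M.nodes - 1) + M.Rhat * Matrix.vandermonde M.nodes =
      M.R * Matrix.vandermonde M.nodes := by
    rw [hQhat, hRhat, Matrix.mul_assoc M.R, Matrix.nonsing_inv_mul_cancel_right _ _ hunit]
    noncomm_ring
  intro i k hk
  simpa [Matrix.mul_apply] using congr_fun (congr_fun hmatrix i) ⟨k, hk⟩

end IMEXPeer

end

/-- Theorem 1: Convergence of order `s` of the IMEX-Peer scheme obtained
by extrapolation (`R̂ = R S2`, `Q̂ = R (I - S2) V0 V1⁻¹`) from a zero-stable implicit Peer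
method of stage order `s`, for globally Lipschitz `F0, F1` and a smooth solution `u`. -/
theorem stmt_11 (s m : ℕ) (hs : 1 ≤ s) (T : ℝ) (hT : 0 < T)
    (c : Fin s → ℝ) (hc : Function.Injective c)
    (hc01 : ∀ i, 0 < c i ∧ c i ≤ 1) (hcs : c ⟨s - 1, by omega⟩ = 1)
    (P R S2 Qh Rh V0 V1 C D : Matrix (Fin s) (Fin s) ℝ)
    (hV0 : ∀ i j, V0 i j = c i ^ (j : ℕ))
    (hV1 : ∀ i j, V1 i j = (c i - 1) ^ (j : ℕ))
    (hC : C = Matrix.diagonal c)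
    (hD : D = Matrix.diagonal fun j : Fin s => ((j : ℕ) + 1 : ℝ))
    (hRtri : ∀ i j : Fin s, i < j → R i j = 0)
    (hzs : ∃ K0 : ℝ, ∀ n : ℕ, ∀ i j : Fin s, |(P ^ n) i j| ≤ K0)
    (hPe : ∀ i : Fin s, ∑ j, P i j = 1)
    (hso : C * V0 - P * (C - 1) * V1 - R * V0 * D = 0)
    (hS2tri : ∀ i j : Fin s, i ≤ j → S2 i j = 0)
    (hRh : Rh = R * S2) (hQ : Qh = R * ((1 - S2) * V0 * V1⁻¹))
    (F0 F1 : EuclideanSpace ℝ (Fin m) → EuclideanSpace ℝ (Fin m))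
    (L0 L1 : NNReal) (hF0 : LipschitzWith L0 F0) (hF1 : LipschitzWith L1 F1)
    (u : ℝ → EuclideanSpace ℝ (Fin m))
    (hu : ContDiffOn ℝ ((s : ℕ∞) + 2) u (Set.Icc 0 (T + 1)))
    (hφ : ContDiffOn ℝ ((s : ℕ∞) + 1) (fun t => F0 (u t)) (Set.Icc 0 (T + 1)))
    (hode : ∀ t ∈ Set.Icc (0 : ℝ) (T + 1),
      HasDerivWithinAt u (F0 (u t) + F1 (u t)) (Set.Icc 0 (T + 1)) t) :
    ∃ C' > (0 : ℝ), ∃ h0 > (0 : ℝ), ∀ Δt : ℝ, 0 < Δt → Δt < h0 →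
      ∀ N : ℕ, (N : ℝ) * Δt ≤ T →
      ∀ w : ℕ → Fin s → EuclideanSpace ℝ (Fin m),
        (∀ n : ℕ, 1 ≤ n → n ≤ N → ∀ i : Fin s,
          w n i = (∑ j, P i j • w (n - 1) j)
            + Δt • (∑ j, Qh i j • F0 (w (n - 1) j))
            + Δt • (∑ j, Rh i j • F0 (w n j))
            + Δt • (∑ j, R i j • F1 (w n j))) →
        (∀ i : Fin s, ‖w 0 i - u (c i * Δt)‖ ≤ Δt ^ s) →
        ∀ n : ℕ, n ≤ N → ∀ i : Fin s,
          ‖w n i - u ((n : ℝ) * Δt + c i * Δt)‖ ≤ C' * Δt ^ s := by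
  obtain rfl : V0 = Matrix.vandermonde c := Matrix.ext hV0
  obtain rfl : V1 = Matrix.vandermonde (c - 1) := Matrix.ext fun i j => by simp [hV1]
  subst hC hD
  let M : IMEXPeer (Fin s) := ⟨c, P, Qh, Rh, R⟩
  have hu' : ContDiffOn ℝ (s + 1) u (Set.Icc 0 (T + 1)) :=
    hu.of_le (by rw [← one_add_one_eq_two, ← add_assoc]; exact le_self_add)
  have hφ' : ContDiffOn ℝ s (F0 ∘ u) (Set.Icc 0 (T + 1)) := hφ.of_le le_self_add
  obtain ⟨C, hC, h0, hh0, hconv⟩ := stmt_11_general M hT.le (lt_add_one T)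
    (fun i => ⟨(hc01 i).1.le, (hc01 i).2⟩) hzs (IMEXPeer.stageOrder_of_vandermonde hPe hso)
    (IMEXPeer.extrapolationOrder_of_vandermonde hc hRh hQ) hF0 hF1 hu' hφ' hode
  refine ⟨2 * C, by positivity, h0, hh0, fun Δt hΔt hΔt0 N hN w hw hstart n hn i => ?_⟩
  have hsol : M.IsNumericalSolution F0 F1 Δt N w := fun k hk =>
    sub_eq_zero.2 (funext (hw (k + 1) k.succ_pos hk))
  have hstart0 : ‖M.globalError u Δt w 0‖ ≤ Δt ^ s :=
    (pi_norm_le_iff_of_nonneg (by positivity)).2 fun j => by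
      simpa [M, IMEXPeer.globalError, IMEXPeer.stageValues] using hstart j
  calc ‖w n i - u (n * Δt + c i * Δt)‖ ≤ ‖M.globalError u Δt w n‖ :=
        norm_le_pi_norm (M.globalError u Δt w n) i
    _ ≤ C * (‖M.globalError u Δt w 0‖ + Δt ^ s) := hconv Δt hΔt hΔt0 N hN w hsol n hn
    _ ≤ 2 * C * Δt ^ s := by linarith [mul_le_mul_of_nonneg_left hstart0 hC.le]
end
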